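/- Let μ > −1 be real and set c̃ = (Γ((n−1)/2)/Γ(1/2)) · Γ((μ+1)/2) / Γ((μ+n−1)/2). Then for every measurable φ : S^{n-1} → [0,∞], ∫_{S^{n-1}} (Fφ)(w) · |w_n|^{μ} (1 − w_n²)^{(1−μ−n)/2} d*w = c̃ · ∫_{S^{n-1}} φ(θ) (1 − θ_n²)^{μ/2} |θ_n|^{−1−μ} d*θ, the equality holding in [0,∞]. (Case k = n−1, p = 1 of the paper's explicit weighted identity for the Funk-type transform F_k.) -/

import Mathlib

open MeasureTheory Metric Real
open scoped ENNReal NNReal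

noncomputable section

/-- The normalized (probability) surface measure `d*θ` on the unit sphere of
`EuclideanSpace ℝ (Fin n)`. -/
def sphMeasure (n : ℕ) : Measure (sphere (0 : EuclideanSpace ℝ (Fin n)) 1) :=
  ((volume : Measure (EuclideanSpace ℝ (Fin n))).toSphere Set.univ)⁻¹ •
    (volume : Measure (EuclideanSpace ℝ (Fin n))).toSphere

/-- The hyperplane Radon transform: `Rf(θ,t) = ∫_{θ^⊥} f(tθ + y) dy`, where `θ^⊥` carries its
canonical Lebesgue measure as an (n-1)-dimensional inner product space. -/
def Radon (n : ℕ) (f : EuclideanSpace ℝ (Fin n) → ℝ≥0∞)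
    (θ : sphere (0 : EuclideanSpace ℝ (Fin n)) 1) (t : ℝ) : ℝ≥0∞ :=
  ∫⁻ y : ((ℝ ∙ (θ : EuclideanSpace ℝ (Fin n)))ᗮ),
    f (t • (θ : EuclideanSpace ℝ (Fin n)) + (y : EuclideanSpace ℝ (Fin n)))

/-- The codimension-one Funk transform: the average of `φ` over the great subsphere
`S^{n-1} ∩ w^⊥` (the unit sphere of the subspace `w^⊥`, with its normalized surface
measure). -/
def Funk (n : ℕ) (φ : sphere (0 : EuclideanSpace ℝ (Fin n)) 1 → ℝ≥0∞)
    (w : sphere (0 : EuclideanSpace ℝ (Fin n)) 1) : ℝ≥0∞ :=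
  ((volume : Measure ((ℝ ∙ (w : EuclideanSpace ℝ (Fin n)))ᗮ)).toSphere Set.univ)⁻¹ *
    ∫⁻ v : sphere (0 : ((ℝ ∙ (w : EuclideanSpace ℝ (Fin n)))ᗮ)) 1,
      φ ⟨((v : ((ℝ ∙ (w : EuclideanSpace ℝ (Fin n)))ᗮ)) : EuclideanSpace ℝ (Fin n)), by
          have hv := v.2
          simp only [mem_sphere_iff_norm, sub_zero] at hv ⊢
          rwa [Submodule.coe_norm] at hv⟩
      ∂((volume : Measure ((ℝ ∙ (w : EuclideanSpace ℝ (Fin n)))ᗮ)).toSphere)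


abbrev EE (m : ℕ) := EuclideanSpace ℝ (Fin m)

/-- Join the first coordinates with the last one. -/
def joinLast (m : ℕ) (p : EE m) (t : ℝ) : EE (m + 1) :=
  WithLp.toLp 2 (Fin.insertNth (α := fun _ => ℝ) (Fin.last m) t (fun i => p i))

lemma joinLast_last (m : ℕ) (p : EE m) (t : ℝ) : joinLast m p t (Fin.last m) = t := by
  simp [joinLast]

lemma joinLast_castSucc (m : ℕ) (p : EE m) (t : ℝ) (i : Fin m) :
    joinLast m p t i.castSucc = p i := by
  simp [joinLast]

/-- The first coordinates. -/
def initPart (m : ℕ) (x : EE (m + 1)) : EE m := WithLp.toLp 2 (fun i => x i.castSucc)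

lemma initPart_joinLast (m : ℕ) (p : EE m) (t : ℝ) : initPart m (joinLast m p t) = p := by
  ext i; simp [initPart, joinLast_castSucc]

lemma joinLast_initPart (m : ℕ) (x : EE (m + 1)) :
    joinLast m (initPart m x) (x (Fin.last m)) = x := by
  ext i
  refine Fin.lastCases ?_ (fun i => ?_) i
  · simp [joinLast_last]
  · simp [joinLast_castSucc, initPart]

lemma measurable_initPart (m : ℕ) : Measurable (initPart m) := by
  unfold initPart
  have : Continuous (fun x : EE (m+1) => (WithLp.toLp 2 (fun i => x (Fin.castSucc i)) : EE m)) := by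
    fun_prop
  exact this.measurable

lemma continuous_joinLast (m : ℕ) : Continuous (fun q : EE m × ℝ => joinLast m q.1 q.2) := by
  unfold joinLast
  refine (PiLp.continuous_toLp 2 _).comp ?_
  refine continuous_pi fun i => ?_
  refine Fin.lastCases ?_ (fun i => ?_) i
  · simp; fun_prop
  · simp; fun_prop

lemma measurable_joinLast (m : ℕ) : Measurable (fun q : EE m × ℝ => joinLast m q.1 q.2) :=
  (continuous_joinLast m).measurable

lemma inner_joinLast (m : ℕ) (p q : EE m) (s t : ℝ) :
    inner ℝ (joinLast m p s) (joinLast m q t) = inner ℝ p q + s * t := by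
  simp only [PiLp.inner_apply, Fin.sum_univ_castSucc, joinLast_castSucc, joinLast_last]
  simp [mul_comm]

lemma normsq_joinLast (m : ℕ) (p : EE m) (s : ℝ) :
    ‖joinLast m p s‖ ^ 2 = ‖p‖ ^ 2 + s ^ 2 := by
  rw [← real_inner_self_eq_norm_sq, inner_joinLast, real_inner_self_eq_norm_sq]; ring

lemma lintegral_joinLast (m : ℕ) (f : EE (m + 1) → ℝ≥0∞) (hf : Measurable f) :
    ∫⁻ x, f x = ∫⁻ p : EE m, ∫⁻ t : ℝ, f (joinLast m p t) := by
  rw [← (PiLp.volume_preserving_toLp (Fin (m+1))).lintegral_comp hf,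
    ← (volume_preserving_piFinSuccAbove (fun _ : Fin (m+1) => ℝ) (Fin.last m)).symm.lintegral_comp
      (f := fun b => f (WithLp.toLp 2 b)) (hf.comp (WithLp.measurable_toLp 2 _)), Measure.volume_eq_prod, lintegral_prod_symm,
      ← (PiLp.volume_preserving_ofLp (Fin m)).lintegral_comp]
  · rfl
  · refine Measurable.lintegral_prod_left' (f := fun z : ℝ × (Fin m → ℝ) => f (WithLp.toLp 2 ((MeasurableEquiv.piFinSuccAbove (fun _ : Fin (m+1) => ℝ) (Fin.last m)).symm z))) ?_
    exact (hf.comp (WithLp.measurable_toLp 2 _)).comp (MeasurableEquiv.measurable _)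
  · exact ((hf.comp (WithLp.measurable_toLp 2 _)).comp (MeasurableEquiv.measurable _)).aemeasurable

section polar
variable {V : Type*} [NormedAddCommGroup V] [InnerProductSpace ℝ V] [FiniteDimensional ℝ V]
  [MeasurableSpace V] [BorelSpace V] [Nontrivial V]

lemma lintegral_polar (f : V → ℝ≥0∞) (hf : Measurable f) :
    ∫⁻ x, f x = ∫⁻ w : sphere (0 : V) 1, ∫⁻ r in Set.Ioi (0 : ℝ),
      ENNReal.ofReal (r ^ (Module.finrank ℝ V - 1)) * f (r • (w : V))
      ∂volume ∂(volume : Measure V).toSphere := by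
  have h1 : ∫⁻ x, f x = ∫⁻ x : ({(0 : V)}ᶜ : Set V), f x.1 ∂((volume : Measure V).comap (↑)) := by
    rw [lintegral_subtype_comap (measurableSet_singleton _).compl,
        restrict_compl_singleton]
  have h2 := ((volume : Measure V).measurePreserving_homeomorphUnitSphereProd).lintegral_comp
    (f := fun z => f (z.2.1 • z.1.1)) (by fun_prop)
  rw [h1]
  have h3 : ∀ x : ({(0 : V)}ᶜ : Set V), ((homeomorphUnitSphereProd V x).2.1 •
     (homeomorphUnitSphereProd V x).1.1) = x.1 := by
    intro x
    simp only [homeomorphUnitSphereProd_apply_snd_coe, homeomorphUnitSphereProd_apply_fst_coe]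
    rw [smul_smul, mul_inv_cancel₀ (norm_ne_zero_iff.2 x.2), one_smul]
  simp only [h3] at h2
  rw [h2, lintegral_prod _ (by fun_prop)]
  refine lintegral_congr fun w => ?_
  rw [Measure.volumeIoiPow, lintegral_withDensity_eq_lintegral_mul _ (by fun_prop) (by fun_prop)]
  rw [← lintegral_subtype_comap measurableSet_Ioi]
  rfl

lemma lintegral_gauss (V : Type*) [NormedAddCommGroup V] [InnerProductSpace ℝ V] [FiniteDimensional ℝ V]
  [MeasurableSpace V] [BorelSpace V] :
    ∫⁻ x : V, ENNReal.ofReal (exp (-‖x‖ ^ 2)) = ENNReal.ofReal (π ^ (Module.finrank ℝ V / 2 : ℝ)) := by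
  have h := GaussianFourier.integral_rexp_neg_mul_sq_norm (V := V) one_pos
  simp only [neg_mul, one_mul, div_one] at h
  rw [← h, ofReal_integral_eq_lintegral_ofReal]
  · by_contra hc
    rw [integral_undef hc] at h
    have : 0 < π ^ (Module.finrank ℝ V / 2 : ℝ) := by positivity
    linarith
  · exact Filter.Eventually.of_forall fun x => by positivity

open scoped Pointwise in
lemma toSphere_ae_ne {v : V} (hv : v ≠ 0) :
    ∀ᵐ w : sphere (0 : V) 1 ∂(volume : Measure V).toSphere, inner ℝ v (w : V) ≠ 0 := by
  rw [ae_iff]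
  have hm : MeasurableSet {w : sphere (0 : V) 1 | ¬ inner ℝ v (w : V) ≠ 0} := by
    simp only [not_not]
    exact measurableSet_eq_fun (by fun_prop) (by fun_prop)
  rw [Measure.toSphere_apply' _ hm]
  have : (volume : Measure V) (Set.Ioo (0 : ℝ) 1 • (Subtype.val '' {w : sphere (0 : V) 1 | ¬ inner ℝ v (w : V) ≠ 0})) = 0 := by
    refine measure_mono_null ?_ (Measure.addHaar_submodule (volume : Measure V) (ℝ ∙ v)ᗮ ?_)
    · rintro _ ⟨r, hr, _, ⟨w, hw, rfl⟩, rfl⟩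
      simp only [ne_eq, not_not, Set.mem_ofPred_eq] at hw
      simp only [SetLike.mem_coe, Submodule.mem_orthogonal_singleton_iff_inner_right, inner_smul_right, hw, mul_zero]
    · intro h
      have : v ∈ (ℝ ∙ v)ᗮ := h ▸ Submodule.mem_top
      rw [Submodule.mem_orthogonal_singleton_iff_inner_right] at this
      exact hv (inner_self_eq_zero.1 this)
  rw [this, mul_zero]
end polar

lemma lintegral_gamma {q b : ℝ} (hq : -1 < q) (hb : 0 < b) :
    ∫⁻ r in Set.Ioi (0 : ℝ), ENNReal.ofReal (r ^ q * exp (-b * r ^ 2)) =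
      ENNReal.ofReal (b ^ (-(q + 1) / 2) * (1 / 2) * Gamma ((q + 1) / 2)) := by
  have h := integral_rpow_mul_exp_neg_mul_rpow (p := 2) two_pos hq hb
  simp only [rpow_two] at h
  rw [← h, ofReal_integral_eq_lintegral_ofReal]
  · by_contra hc
    rw [integral_undef hc] at h
    have h1 : 0 < Gamma ((q+1)/2) := Gamma_pos_of_pos (by linarith)
    have : 0 < b ^ (-(q + 1) / 2) * (1 / 2) * Gamma ((q + 1) / 2) := by positivity
    linarith
  · filter_upwards [ae_restrict_mem measurableSet_Ioi] with x hx
    have : 0 < x := hx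
    positivity

lemma lintegral_gamma_line {q : ℝ} (hq : -1 < q) :
    ∫⁻ t : ℝ, ENNReal.ofReal (exp (-t ^ 2)) * ENNReal.ofReal |t| ^ q =
      ENNReal.ofReal (Gamma ((q + 1) / 2)) := by
  have h : ∫⁻ t in Set.Ioi (0:ℝ), ENNReal.ofReal (exp (-t ^ 2)) * ENNReal.ofReal |t| ^ q = 
      ENNReal.ofReal (1 / 2 * Gamma ((q + 1) / 2)) := by
    have := lintegral_gamma hq one_pos
    simp only [one_rpow, one_mul] at this
    rw [← this]
    refine setLIntegral_congr_fun measurableSet_Ioi fun t ht => ?_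
    have ht : 0 < t := ht
    simp only [abs_of_pos ht]
    rw [ENNReal.ofReal_rpow_of_pos ht, ← ENNReal.ofReal_mul (by positivity), mul_comm]
    simp
  have h2 : ∫⁻ t in Set.Iio (0:ℝ), ENNReal.ofReal (exp (-t ^ 2)) * ENNReal.ofReal |t| ^ q = 
      ENNReal.ofReal (1 / 2 * Gamma ((q + 1) / 2)) := by
    rw [← h, ← (Measure.measurePreserving_neg (volume : Measure ℝ)).setLIntegral_comp_preimage measurableSet_Iio (by fun_prop)]
    simp
  have h1 : 0 < Gamma ((q+1)/2) := Gamma_pos_of_pos (by linarith)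
  rw [← lintegral_add_compl _ (measurableSet_Ioi (a := (0:ℝ))), Set.compl_Ioi, setLIntegral_congr Iio_ae_eq_Iic.symm, h, h2,
    ← ENNReal.ofReal_add (by positivity) (by positivity)]
  congr 1; ring

lemma lintegral_rot (k : ℕ) (v : EE (k + 1)) (g : ℝ → ℝ≥0∞) (hg : Measurable g) :
    ∫⁻ x : EE (k + 1), ENNReal.ofReal (exp (-‖x‖ ^ 2)) * g (inner ℝ x v) =
      ENNReal.ofReal (π ^ (k / 2 : ℝ)) *
        ∫⁻ t : ℝ, ENNReal.ofReal (exp (-t ^ 2)) * g (‖v‖ * t) := by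
  obtain ⟨u, hu, huv⟩ : ∃ u : EE (k + 1), ‖u‖ = 1 ∧ v = ‖v‖ • u := by
    by_cases hv : v = 0
    · exact ⟨EuclideanSpace.single 0 1, by simp, by simp [hv]⟩
    · have := norm_ne_zero_iff.2 hv
      exact ⟨‖v‖⁻¹ • v, by simp [norm_smul, this], by rw [smul_smul, mul_inv_cancel₀ this, one_smul]⟩
  obtain ⟨b, hb⟩ := Orthonormal.exists_orthonormalBasis_extension_of_card_eq (𝕜 := ℝ) (E := EE (k + 1))
    (ι := Fin (k + 1)) (by simp) (v := fun _ => u) (s := {Fin.last k}) (by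
      refine ⟨fun i => hu, ?_⟩
      intro i j hij
      exact absurd (Subtype.ext (i.2.trans j.2.symm)) hij)
  have hb := hb (Fin.last k) rfl
  have key : ∀ x, inner ℝ x v = ‖v‖ * b.repr x (Fin.last k) := by
    intro x
    rw [b.repr_apply_apply, hb, huv, inner_smul_right, norm_smul, hu, norm_norm, mul_one, real_inner_comm]
  have hF : Measurable (fun y : EE (k+1) => ENNReal.ofReal (exp (-‖y‖ ^ 2)) * g (‖v‖ * y (Fin.last k))) := by
    fun_prop
  calc _ = ∫⁻ x : EE (k + 1), (fun y : EE (k+1) => ENNReal.ofReal (exp (-‖y‖ ^ 2)) * g (‖v‖ * y (Fin.last k))) (b.repr x) := by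
        refine lintegral_congr fun x => ?_
        simp only [key, LinearIsometryEquiv.norm_map]
    _ = _ := by
      rw [b.measurePreserving_repr.lintegral_comp hF, lintegral_joinLast _ _ hF]
      simp only [normsq_joinLast, joinLast_last]
      have := lintegral_gauss (EE k)
      simp only [finrank_euclideanSpace, Fintype.card_fin] at this
      rw [← this, ← lintegral_mul_const _ (by fun_prop)]
      refine lintegral_congr fun p => ?_
      rw [← lintegral_const_mul _ (by fun_prop)]
      refine lintegral_congr fun t => ?_
      rw [← mul_assoc, ← ENNReal.ofReal_mul (by positivity), ← exp_add]
      ring_nf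

lemma lintegral_inversion {a : ℝ} (ha : a ≠ 0) (μ : ℝ) (g : ℝ → ℝ≥0∞) :
    ∫⁻ t : ℝ, ENNReal.ofReal |t| ^ (μ - 1) * g (-a / t) =
      ENNReal.ofReal |a| ^ μ * ∫⁻ s : ℝ, ENNReal.ofReal |s| ^ (-1 - μ) * g s := by
  have hms : MeasurableSet ({0}ᶜ : Set ℝ) := (measurableSet_singleton _).compl
  have hinj : Set.InjOn (fun s : ℝ => -a / s) {0}ᶜ := by
    intro x hx y hy h
    have hx : x ≠ 0 := hx
    have hy : y ≠ 0 := hy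
    simp only at h
    field_simp at h
    linarith
  have himg : (fun s : ℝ => -a / s) '' {0}ᶜ = {0}ᶜ := by
    ext y
    simp only [Set.mem_image, Set.mem_compl_iff, Set.mem_singleton_iff]
    constructor
    · rintro ⟨x, hx, rfl⟩
      exact div_ne_zero (neg_ne_zero.2 ha) hx
    · intro hy
      exact ⟨-a / y, div_ne_zero (neg_ne_zero.2 ha) hy, by field_simp⟩
  have := lintegral_image_eq_lintegral_abs_deriv_mul (f := fun s : ℝ => -a / s)
    (f' := fun s => a / s ^ 2) hms (fun x hx => by
      have hx : x ≠ 0 := hx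
      have h := ((hasDerivAt_inv hx).const_mul (-a)).hasDerivWithinAt (s := {0}ᶜ)
      refine (h.congr_deriv ?_)
      field_simp) hinj (fun t => ENNReal.ofReal |t| ^ (μ - 1) * g (-a / t))
  rw [himg, restrict_compl_singleton] at this
  rw [this]
  have hfin : ENNReal.ofReal |a| ^ μ ≠ ⊤ := by
    rw [ENNReal.ofReal_rpow_of_pos (abs_pos.2 ha)]; exact ENNReal.ofReal_ne_top
  rw [← lintegral_const_mul' _ _ hfin]
  refine lintegral_congr_ae ?_
  filter_upwards [compl_mem_ae_iff.2 (measure_singleton (μ := (volume : Measure ℝ)) 0)] with s hs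
  have hs : s ≠ 0 := hs
  have h1 : -a / (-a / s) = s := by field_simp
  have hs' := abs_pos.2 hs
  have ha' := abs_pos.2 ha
  simp only [h1, abs_div, abs_neg]
  rw [← mul_assoc, ← mul_assoc]
  congr 1
  rw [ENNReal.ofReal_rpow_of_pos (by positivity), ENNReal.ofReal_rpow_of_pos ha', ENNReal.ofReal_rpow_of_pos hs',
    ← ENNReal.ofReal_mul (by positivity), ← ENNReal.ofReal_mul (by positivity)]
  congr 1
  rw [div_rpow ha'.le hs'.le, abs_pow, rpow_sub ha', rpow_sub hs', rpow_sub hs', rpow_one, rpow_neg hs'.le, rpow_one]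
  field_simp

lemma initPart_add (m : ℕ) (x y : EE (m + 1)) : initPart m (x + y) = initPart m x + initPart m y := by
  ext i; simp [initPart]

lemma initPart_smul (m : ℕ) (r : ℝ) (x : EE (m + 1)) : initPart m (r • x) = r • initPart m x := by
  ext i; simp [initPart]

lemma normsq_initPart (m : ℕ) (x : EE (m + 1)) :
    ‖initPart m x‖ ^ 2 = ‖x‖ ^ 2 - x (Fin.last m) ^ 2 := by
  have := normsq_joinLast m (initPart m x) (x (Fin.last m))
  rw [joinLast_initPart] at this
  linarith

lemma inner_eq_init (m : ℕ) (x y : EE (m + 1)) :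
    inner ℝ x y = inner ℝ (initPart m x) (initPart m y) + x (Fin.last m) * y (Fin.last m) := by
  conv_lhs => rw [← joinLast_initPart m x, ← joinLast_initPart m y]
  rw [inner_joinLast]

/-- Parametrization of a hyperplane as a graph over the first coordinates. -/
def graphEquiv (m : ℕ) (w : EE (m + 1)) (hw : w (Fin.last m) ≠ 0) :
    (ℝ ∙ w)ᗮ ≃ₗ[ℝ] EE m where
  toFun y := initPart m y.1
  map_add' x y := initPart_add m _ _
  map_smul' r x := initPart_smul m _ _
  invFun p := ⟨joinLast m p (-inner ℝ (initPart m w) p / w (Fin.last m)), by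
    rw [Submodule.mem_orthogonal_singleton_iff_inner_right, inner_eq_init, initPart_joinLast,
      joinLast_last]
    field_simp
    ring⟩
  left_inv y := by
    apply Subtype.ext
    have hy := y.2
    rw [Submodule.mem_orthogonal_singleton_iff_inner_right, inner_eq_init] at hy
    conv_rhs => rw [← joinLast_initPart m y.1]
    simp only
    congr 1
    field_simp
    linarith
  right_inv p := initPart_joinLast m p _

lemma graph_lemma (k : ℕ) (w : EE (k + 2)) (hw1 : ‖w‖ = 1) (hw : w (Fin.last (k + 1)) ≠ 0)
    (f : EE (k + 2) → ℝ≥0∞) (hf : Measurable f) :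
    ∫⁻ p : EE (k + 1), f (joinLast (k + 1) p
        (-inner ℝ (initPart (k + 1) w) p / w (Fin.last (k + 1)))) =
      ENNReal.ofReal |w (Fin.last (k + 1))| * ∫⁻ y : (ℝ ∙ w)ᗮ, f y := by
  set a := w (Fin.last (k + 1)) with ha
  let L := (graphEquiv (k + 1) w hw).symm.toContinuousLinearEquiv
  have hL : ∀ p, ((L p : (ℝ ∙ w)ᗮ) : EE (k + 2)) = joinLast (k + 1) p
        (-inner ℝ (initPart (k + 1) w) p / a) := fun p => rfl
  obtain ⟨c, hc⟩ : ∃ c : ℝ≥0, Measure.map L (volume : Measure (EE (k + 1))) =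
      c • (volume : Measure (ℝ ∙ w)ᗮ) := by
    have : (Measure.map L (volume : Measure (EE (k + 1)))).IsAddHaarMeasure :=
      L.isAddHaarMeasure_map _
    exact ⟨_, Measure.isAddLeftInvariant_eq_smul _ _⟩
  have key : ∀ g : EE (k + 2) → ℝ≥0∞, Measurable g → ∫⁻ p : EE (k + 1), g (joinLast (k + 1) p
        (-inner ℝ (initPart (k + 1) w) p / a)) = c * ∫⁻ y : (ℝ ∙ w)ᗮ, g y := by
    intro g hg
    simp only [← hL]
    rw [← lintegral_map (f := fun y : (ℝ ∙ w)ᗮ => g y) (by fun_prop) L.continuous.measurable, hc, lintegral_smul_measure]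
    rfl
  rw [key f hf]
  congr 1
  have hG := key (fun x => ENNReal.ofReal (exp (-‖x‖ ^ 2))) (by fun_prop)
  have h1 := lintegral_gauss (ℝ ∙ w)ᗮ
  rw [(graphEquiv (k + 1) w hw).finrank_eq, finrank_euclideanSpace, Fintype.card_fin] at h1
  have h2 := lintegral_rot k (initPart (k + 1) w) (fun s => ENNReal.ofReal (exp (-(s / a) ^ 2))) (by fun_prop)
  simp only [Submodule.coe_norm] at h1
  rw [h1] at hG
  have h3 : ∫⁻ p : EE (k + 1), ENNReal.ofReal (exp (-‖joinLast (k + 1) p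
        (-inner ℝ (initPart (k + 1) w) p / a)‖ ^ 2)) = ∫⁻ x : EE (k + 1), ENNReal.ofReal (exp (-‖x‖ ^ 2)) * ENNReal.ofReal (exp (-(inner ℝ x (initPart (k + 1) w) / a) ^ 2)) := by
    refine lintegral_congr fun p => ?_
    rw [normsq_joinLast, ← ENNReal.ofReal_mul (by positivity), ← exp_add, real_inner_comm]
    ring_nf
  have hn : ‖initPart (k + 1) w‖ ^ 2 = 1 - a ^ 2 := by rw [normsq_initPart, hw1]; ring
  have h4 : ∫⁻ t : ℝ, ENNReal.ofReal (exp (-t ^ 2)) * ENNReal.ofReal (exp (-(‖initPart (k + 1) w‖ * t / a) ^ 2))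
      = ENNReal.ofReal (√π * |a|) := by
    have hpos : 0 < 1 / a ^ 2 := by positivity
    have h5 := integral_gaussian (1 / a ^ 2)
    have h6 : √(π / (1 / a ^ 2)) = √π * |a| := by
      rw [div_div_eq_mul_div, div_one, sqrt_mul pi_pos.le, sqrt_sq_eq_abs]
    rw [← h6, ← h5, ofReal_integral_eq_lintegral_ofReal (integrable_exp_neg_mul_sq hpos)
      (Filter.Eventually.of_forall fun x => by positivity)]
    refine lintegral_congr fun t => ?_
    rw [← ENNReal.ofReal_mul (by positivity), ← exp_add]
    congr 2
    rw [div_pow, mul_pow, hn]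
    field_simp
    ring
  rw [h3, h2, h4, ← ENNReal.ofReal_mul (by positivity)] at hG
  have h7 : π ^ ((k : ℝ) / 2) * (√π * |a|) = |a| * π ^ (((k + 1 : ℕ) : ℝ) / 2) := by
    rw [sqrt_eq_rpow]
    push_cast
    rw [add_div, rpow_add pi_pos]
    ring
  rw [h7, ENNReal.ofReal_mul (by positivity)] at hG
  exact ((ENNReal.mul_left_inj (by simp; positivity) ENNReal.ofReal_ne_top).1 hG).symm

/-- Extension of a function on the sphere to the whole space. -/
def extSph {n : ℕ} (φ : sphere (0 : EE n) 1 → ℝ≥0∞) : EE n → ℝ≥0∞ :=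
  Function.extend Subtype.val φ 0

lemma measurable_extSph {n : ℕ} {φ : sphere (0 : EE n) 1 → ℝ≥0∞} (hφ : Measurable φ) :
    Measurable (extSph φ) :=
  (MeasurableEmbedding.subtype_coe isClosed_sphere.measurableSet).measurable_extend hφ
    measurable_const

lemma extSph_apply {n : ℕ} (φ : sphere (0 : EE n) 1 → ℝ≥0∞) (w : sphere (0 : EE n) 1) :
    extSph φ w.1 = φ w :=
  Subtype.val_injective.extend_apply _ _ _

/-- Degree-zero homogeneous extension times a Gaussian. -/
def gaussExt {n : ℕ} (φ : sphere (0 : EE n) 1 → ℝ≥0∞) (y : EE n) : ℝ≥0∞ :=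
  extSph φ (‖y‖⁻¹ • y) * ENNReal.ofReal (exp (-‖y‖ ^ 2))

lemma measurable_gaussExt {n : ℕ} {φ : sphere (0 : EE n) 1 → ℝ≥0∞} (hφ : Measurable φ) :
    Measurable (gaussExt φ) := by
  unfold gaussExt
  have := measurable_extSph hφ
  fun_prop

lemma gaussExt_smul {n : ℕ} (φ : sphere (0 : EE n) 1 → ℝ≥0∞) (y : EE n) (hy : ‖y‖ = 1) {r : ℝ}
    (hr : 0 < r) :
    gaussExt φ (r • y) = extSph φ y * ENNReal.ofReal (exp (-r ^ 2)) := by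
  unfold gaussExt
  rw [norm_smul, hy, mul_one, norm_of_nonneg hr.le, smul_smul, inv_mul_cancel₀ hr.ne', one_smul]

lemma funk_gauss (k : ℕ) (φ : sphere (0 : EE (k + 2)) 1 → ℝ≥0∞) (hφ : Measurable φ)
    (w : sphere (0 : EE (k + 2)) 1) :
    ∫⁻ y : (ℝ ∙ (w : EE (k + 2)))ᗮ, gaussExt φ y =
      ENNReal.ofReal (π ^ (((k + 1 : ℕ) : ℝ) / 2)) * Funk (k + 2) φ w := by
  have hw : ‖(w : EE (k + 2))‖ = 1 := by simp
  have hw0 : (w : EE (k + 2)) ≠ 0 := by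
    intro h; rw [h] at hw; simp at hw
  have hfin : Module.finrank ℝ (ℝ ∙ (w : EE (k + 2)))ᗮ = k + 1 := by
    have : Fact (Module.finrank ℝ (EE (k + 2)) = (k + 1) + 1) := ⟨by simp⟩
    exact Submodule.finrank_orthogonal_span_singleton hw0
  have : Nontrivial (ℝ ∙ (w : EE (k + 2)))ᗮ := Module.nontrivial_of_finrank_pos (R := ℝ) (by omega)
  have hm := measurable_gaussExt hφ
  have hme := measurable_extSph hφ
  set σ := (volume : Measure (ℝ ∙ (w : EE (k + 2)))ᗮ).toSphere with hσ
  set I : ℝ≥0∞ := ∫⁻ r in Set.Ioi (0 : ℝ), ENNReal.ofReal (r ^ (k + 1 - 1)) * ENNReal.ofReal (exp (-r ^ 2)) with hI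
  have hg := lintegral_gauss (ℝ ∙ (w : EE (k + 2)))ᗮ
  have hpolar := lintegral_polar (V := (ℝ ∙ (w : EE (k + 2)))ᗮ)
  simp only [hfin] at hg hpolar
  have hg2 : ENNReal.ofReal (π ^ (((k + 1 : ℕ) : ℝ) / 2)) = I * σ Set.univ := by
    rw [← hg, hpolar _ (by fun_prop), ← lintegral_const]
    refine lintegral_congr fun v => ?_
    refine setLIntegral_congr_fun measurableSet_Ioi fun r hr => ?_
    have hr : 0 < r := hr
    have hv : ‖(v : (ℝ ∙ (w : EE (k + 2)))ᗮ)‖ = 1 := by simp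
    simp only [norm_smul, hv, mul_one, norm_of_nonneg hr.le]
  have h1 : ∫⁻ y : (ℝ ∙ (w : EE (k + 2)))ᗮ, gaussExt φ y = I * ∫⁻ v, extSph φ (v.1 : EE (k + 2)) ∂σ := by
    rw [hpolar _ (by fun_prop), ← lintegral_const_mul _ (by fun_prop)]
    refine lintegral_congr fun v => ?_
    rw [hI, ← lintegral_mul_const _ (by fun_prop)]
    refine setLIntegral_congr_fun measurableSet_Ioi fun r hr => ?_
    have hv : ‖((v : (ℝ ∙ (w : EE (k + 2)))ᗮ) : EE (k + 2))‖ = 1 := by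
      rw [← Submodule.coe_norm]; simp
    simp only [Submodule.coe_smul]
    rw [gaussExt_smul φ _ hv hr]
    ring
  have h2 : Funk (k + 2) φ w = (σ Set.univ)⁻¹ * ∫⁻ v, extSph φ (v.1 : EE (k + 2)) ∂σ := by
    unfold Funk
    congr 1
    exact lintegral_congr fun v => (extSph_apply φ _).symm
  have hs0 : σ Set.univ ≠ 0 := by
    rw [Measure.measure_univ_ne_zero]; exact Measure.toSphere_ne_zero _
  rw [h1, h2, hg2, mul_assoc I, ← mul_assoc (σ Set.univ), ENNReal.mul_inv_cancel hs0 (measure_ne_top _ _), one_mul]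

/-- The auxiliary function of the proof. -/
def auxF (k : ℕ) (μ : ℝ) (φ : sphere (0 : EE (k + 2)) 1 → ℝ≥0∞) (x : EE (k + 2)) : ℝ≥0∞ :=
  ENNReal.ofReal |x (Fin.last (k + 1))| ^ (μ - 1) *
    ENNReal.ofReal (exp (-‖initPart (k + 1) x‖ ^ 2)) *
    ∫⁻ q : EE (k + 1), gaussExt φ (joinLast (k + 1) q
      (-inner ℝ (initPart (k + 1) x) q / x (Fin.last (k + 1))))

lemma measurable_auxF (k : ℕ) (μ : ℝ) {φ : sphere (0 : EE (k + 2)) 1 → ℝ≥0∞} (hφ : Measurable φ) :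
    Measurable (auxF k μ φ) := by
  unfold auxF
  have h1 := measurable_initPart (k + 1)
  refine Measurable.mul (by fun_prop) ?_
  refine Measurable.lintegral_prod_right' (f := fun z : EE (k + 2) × EE (k + 1) =>
    gaussExt φ (joinLast (k + 1) z.2
      (-inner ℝ (initPart (k + 1) z.1) z.2 / z.1 (Fin.last (k + 1))))) ?_
  refine (measurable_gaussExt hφ).comp ((measurable_joinLast (k + 1)).comp
    (f := fun z : EE (k + 2) × EE (k + 1) => (z.2,
      (-inner ℝ (initPart (k + 1) z.1) z.2 / z.1 (Fin.last (k + 1))))) ?_)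
  fun_prop

lemma ae_coord_ne (n : ℕ) (i : Fin n) :
    ∀ᵐ w : sphere (0 : EE n) 1 ∂(volume : Measure (EE n)).toSphere, (w : EE n) i ≠ 0 := by
  have : Nontrivial (EE n) := ⟨⟨EuclideanSpace.single i 1, 0, by simp⟩⟩
  have := toSphere_ae_ne (V := EE n) (v := EuclideanSpace.single i 1) (by simp)
  filter_upwards [this] with w hw
  simpa [EuclideanSpace.inner_single_left] using hw

lemma initPart_pos (k : ℕ) (w : EE (k + 2)) (h : w 0 ≠ 0) : 0 < ‖initPart (k + 1) w‖ := by
  rw [norm_pos_iff]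
  intro h0
  apply h
  have := congrArg (fun z : EE (k + 1) => z 0) h0
  simpa [initPart] using this

lemma stepA (k : ℕ) (μ : ℝ) (hμ : -1 < μ) (φ : sphere (0 : EE (k + 2)) 1 → ℝ≥0∞)
    (hφ : Measurable φ) :
    ∫⁻ x, auxF k μ φ x = ENNReal.ofReal (π ^ (((k + 1 : ℕ) : ℝ) / 2) *
        (1 / 2 * Gamma ((μ + k + 1) / 2))) *
      ∫⁻ w, Funk (k + 2) φ w * ENNReal.ofReal |(w : EE (k + 2)) (Fin.last (k + 1))| ^ μ *
        ENNReal.ofReal (1 - ((w : EE (k + 2)) (Fin.last (k + 1))) ^ 2) ^ (-(μ + k + 1) / 2)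
        ∂(volume : Measure (EE (k + 2))).toSphere := by
  have hk : (0 : ℝ) ≤ k := Nat.cast_nonneg k
  have hG : 0 < Gamma ((μ + k + 1) / 2) := Gamma_pos_of_pos (by linarith)
  rw [lintegral_polar _ (measurable_auxF k μ hφ), ← lintegral_const_mul' _ _ ENNReal.ofReal_ne_top]
  refine lintegral_congr_ae ?_
  filter_upwards [ae_coord_ne (k + 2) (Fin.last (k + 1)), ae_coord_ne (k + 2) 0] with w hwl hw0
  have hw : ‖(w : EE (k + 2))‖ = 1 := by simp
  have hi := initPart_pos k w hw0
  have hn := normsq_initPart (k + 1) w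
  rw [hw, one_pow] at hn
  set a := (w : EE (k + 2)) (Fin.last (k + 1)) with ha
  have ha' := abs_pos.2 hwl
  have hb : 0 < 1 - a ^ 2 := by rw [← hn]; positivity
  have hgam := lintegral_gamma (q := μ + k) (b := 1 - a ^ 2) (by linarith) hb
  have hpt : ∀ r ∈ Set.Ioi (0 : ℝ), ENNReal.ofReal (r ^ (Module.finrank ℝ (EE (k + 2)) - 1)) *
      auxF k μ φ (r • (w : EE (k + 2))) = ENNReal.ofReal (r ^ (μ + k) * exp (-(1 - a ^ 2) * r ^ 2)) *
        (ENNReal.ofReal |a| ^ μ * (ENNReal.ofReal (π ^ (((k + 1 : ℕ) : ℝ) / 2)) * Funk (k + 2) φ w)) := by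
    intro r hr
    have hr : 0 < r := hr
    have hq : ∀ q : EE (k + 1), -inner ℝ (initPart (k + 1) (r • (w : EE (k + 2)))) q / (r • (w : EE (k + 2))) (Fin.last (k + 1))
        = -inner ℝ (initPart (k + 1) w) q / (w : EE (k + 2)) (Fin.last (k + 1)) := by
      intro q
      rw [initPart_smul, inner_smul_left]
      simp only [PiLp.smul_apply, smul_eq_mul, conj_trivial]
      field_simp
    unfold auxF
    simp only [hq]
    rw [graph_lemma k w hw hwl _ (measurable_gaussExt hφ), funk_gauss k φ hφ, initPart_smul, norm_smul]
    simp only [PiLp.smul_apply, smul_eq_mul, ← ha]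
    simp only [← mul_assoc]
    congr 2
    rw [abs_mul, norm_of_nonneg hr.le, abs_of_pos hr, ENNReal.ofReal_rpow_of_pos (by positivity), ENNReal.ofReal_rpow_of_pos ha', finrank_euclideanSpace, Fintype.card_fin,
      ← ENNReal.ofReal_mul (by positivity), ← ENNReal.ofReal_mul (by positivity), ← ENNReal.ofReal_mul (by positivity), ← ENNReal.ofReal_mul (by positivity)]
    congr 1
    rw [mul_pow, hn, mul_rpow hr.le ha'.le, rpow_sub hr, rpow_sub ha', rpow_one, rpow_one, rpow_add hr, rpow_natCast,
      show k + 2 - 1 = k + 1 by omega, pow_succ]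
    field_simp
  rw [setLIntegral_congr_fun measurableSet_Ioi hpt, lintegral_mul_const _ (by fun_prop), hgam,
    ENNReal.ofReal_rpow_of_pos hb, mul_assoc (_ ^ _), ENNReal.ofReal_mul (by positivity),
    ENNReal.ofReal_mul (p := π ^ _) (by positivity)]
  ring

lemma stepB (k : ℕ) (μ : ℝ) (hμ : -1 < μ) (φ : sphere (0 : EE (k + 2)) 1 → ℝ≥0∞)
    (hφ : Measurable φ) :
    ∫⁻ x, auxF k μ φ x = ENNReal.ofReal (π ^ ((k : ℝ) / 2) * Gamma ((μ + 1) / 2)) *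
      ∫⁻ y, ENNReal.ofReal ‖initPart (k + 1) y‖ ^ μ *
        (ENNReal.ofReal |y (Fin.last (k + 1))| ^ (-1 - μ) * gaussExt φ y) := by
  have hmg := measurable_gaussExt hφ
  have hmi := measurable_initPart (k + 1)
  have hmj := measurable_joinLast (k + 1)
  have hG : 0 < Gamma ((μ + 1) / 2) := Gamma_pos_of_pos (by linarith)
  rw [lintegral_joinLast _ _ (measurable_auxF k μ hφ)]
  rw [lintegral_joinLast (k + 1) (fun y => ENNReal.ofReal ‖initPart (k + 1) y‖ ^ μ *
        (ENNReal.ofReal |y (Fin.last (k + 1))| ^ (-1 - μ) * gaussExt φ y)) (by fun_prop)]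
  have hmT : Measurable (fun z : (EE (k + 1) × ℝ) × EE (k + 1) => gaussExt φ (joinLast (k + 1) z.2 (-inner ℝ z.1.1 z.2 / z.1.2))) := by
    refine hmg.comp (hmj.comp (f := fun z : (EE (k + 1) × ℝ) × EE (k + 1) => (z.2, (-inner ℝ z.1.1 z.2 / z.1.2))) ?_)
    fun_prop
  have hmJ : ∀ q : EE (k + 1), Measurable (fun s : ℝ => gaussExt φ (joinLast (k + 1) q s)) := by
    intro q
    exact hmg.comp (hmj.comp (f := fun s : ℝ => (q, s)) (by fun_prop))
  -- swap the integrals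
  have h1 : ∀ p : EE (k + 1), ∫⁻ t : ℝ, auxF k μ φ (joinLast (k + 1) p t) =
      ∫⁻ q : EE (k + 1), ENNReal.ofReal (exp (-‖p‖ ^ 2)) * ∫⁻ t : ℝ, ENNReal.ofReal |t| ^ (μ - 1) *
        gaussExt φ (joinLast (k + 1) q (-inner ℝ p q / t)) := by
    intro p
    have hmp : Measurable (fun z : ℝ × EE (k + 1) => gaussExt φ (joinLast (k + 1) z.2 (-inner ℝ p z.2 / z.1))) :=
      hmT.comp (f := fun z : ℝ × EE (k + 1) => ((p, z.1), z.2)) (by fun_prop)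
    have : ∀ t : ℝ, auxF k μ φ (joinLast (k + 1) p t) = ∫⁻ q : EE (k + 1), ENNReal.ofReal (exp (-‖p‖ ^ 2)) *
        (ENNReal.ofReal |t| ^ (μ - 1) * gaussExt φ (joinLast (k + 1) q (-inner ℝ p q / t))) := by
      intro t
      have hmpt : Measurable (fun q : EE (k + 1) => gaussExt φ (joinLast (k + 1) q (-inner ℝ p q / t))) :=
        hmp.comp (f := fun q : EE (k + 1) => (t, q)) (by fun_prop)
      rw [lintegral_const_mul _ (by fun_prop), lintegral_const_mul _ (by fun_prop)]
      unfold auxF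
      simp only [initPart_joinLast, joinLast_last]
      ring
    simp only [this]
    rw [lintegral_lintegral_swap]
    · refine lintegral_congr fun q => ?_
      have hmpq : Measurable (fun t : ℝ => gaussExt φ (joinLast (k + 1) q (-inner ℝ p q / t))) :=
        hmp.comp (f := fun t : ℝ => (t, q)) (by fun_prop)
      rw [lintegral_const_mul _ (by fun_prop)]
    · refine Measurable.aemeasurable ?_
      refine Measurable.mul (by fun_prop) (Measurable.mul (by fun_prop) hmp)
  simp only [h1]
  rw [lintegral_lintegral_swap]
  swap
  · refine Measurable.aemeasurable ?_
    refine Measurable.mul (by fun_prop) ?_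
    refine Measurable.lintegral_prod_right' (f := fun z : (EE (k + 1) × EE (k + 1)) × ℝ =>
      ENNReal.ofReal |z.2| ^ (μ - 1) * gaussExt φ (joinLast (k + 1) z.1.2 (-inner ℝ z.1.1 z.1.2 / z.2))) ?_
    refine Measurable.mul (by fun_prop) ?_
    exact hmT.comp (f := fun z : (EE (k + 1) × EE (k + 1)) × ℝ => ((z.1.1, z.2), z.1.2)) (by fun_prop)
  rw [← lintegral_const_mul' _ _ ENNReal.ofReal_ne_top]
  refine lintegral_congr_ae ?_
  filter_upwards [compl_mem_ae_iff.2 (measure_singleton (μ := (volume : Measure (EE (k + 1)))) 0)] with q hq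
  have hq : q ≠ 0 := hq
  simp only [initPart_joinLast, joinLast_last]
  have hq' : 0 < ‖q‖ := norm_pos_iff.2 hq
  have hqm := hmJ q
  rw [lintegral_const_mul _ (by fun_prop)]
  set G : ℝ≥0∞ := ∫⁻ s : ℝ, ENNReal.ofReal |s| ^ (-1 - μ) * gaussExt φ (joinLast (k + 1) q s) with hGdef
  have h2 : ∫⁻ p : EE (k + 1), ENNReal.ofReal (exp (-‖p‖ ^ 2)) * ∫⁻ t : ℝ, ENNReal.ofReal |t| ^ (μ - 1) *
        gaussExt φ (joinLast (k + 1) q (-inner ℝ p q / t)) =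
      ∫⁻ p : EE (k + 1), (ENNReal.ofReal (exp (-‖p‖ ^ 2)) * ENNReal.ofReal |inner ℝ p q| ^ μ) * G := by
    refine lintegral_congr_ae ?_
    have hnull : (volume : Measure (EE (k + 1))) ((ℝ ∙ q)ᗮ : Submodule ℝ (EE (k + 1))) = 0 := by
      refine Measure.addHaar_submodule _ _ ?_
      intro h
      have : q ∈ (ℝ ∙ q)ᗮ := h ▸ Submodule.mem_top
      rw [Submodule.mem_orthogonal_singleton_iff_inner_right] at this
      exact hq (inner_self_eq_zero.1 this)
    filter_upwards [compl_mem_ae_iff.2 hnull] with p hp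
    have hp : inner ℝ p q ≠ 0 := by
      intro h
      apply hp
      rw [SetLike.mem_coe, Submodule.mem_orthogonal_singleton_iff_inner_left]
      exact h
    rw [lintegral_inversion hp μ (fun s => gaussExt φ (joinLast (k + 1) q s)), ← mul_assoc]
  rw [h2, lintegral_mul_const _ (by fun_prop),
    lintegral_rot k q (fun s => ENNReal.ofReal |s| ^ μ) (by fun_prop), ← mul_assoc]
  congr 1
  have h3 : ∫⁻ t : ℝ, ENNReal.ofReal (exp (-t ^ 2)) * ENNReal.ofReal |‖q‖ * t| ^ μ =
      ENNReal.ofReal ‖q‖ ^ μ * ENNReal.ofReal (Gamma ((μ + 1) / 2)) := by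
    rw [← lintegral_gamma_line hμ, ← lintegral_const_mul _ (by fun_prop)]
    refine lintegral_congr fun t => ?_
    rw [abs_mul, abs_norm, ENNReal.ofReal_mul hq'.le,
      ENNReal.mul_rpow_of_ne_top ENNReal.ofReal_ne_top ENNReal.ofReal_ne_top]
    ring
  rw [h3, ENNReal.ofReal_mul (by positivity)]
  ring

lemma stepC (k : ℕ) (μ : ℝ) (φ : sphere (0 : EE (k + 2)) 1 → ℝ≥0∞)
    (hφ : Measurable φ) :
    ∫⁻ y, ENNReal.ofReal ‖initPart (k + 1) y‖ ^ μ *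
        (ENNReal.ofReal |y (Fin.last (k + 1))| ^ (-1 - μ) * gaussExt φ y) =
      ENNReal.ofReal (1 / 2 * Gamma (((k : ℝ) + 1) / 2)) *
      ∫⁻ w, φ w * ENNReal.ofReal (1 - ((w : EE (k + 2)) (Fin.last (k + 1))) ^ 2) ^ (μ / 2) *
        ENNReal.ofReal |(w : EE (k + 2)) (Fin.last (k + 1))| ^ (-1 - μ)
        ∂(volume : Measure (EE (k + 2))).toSphere := by
  have hmg := measurable_gaussExt hφ
  have hmi := measurable_initPart (k + 1)
  have hk : (0 : ℝ) ≤ k := Nat.cast_nonneg k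
  rw [lintegral_polar _ (by fun_prop), ← lintegral_const_mul' _ _ ENNReal.ofReal_ne_top]
  refine lintegral_congr_ae ?_
  filter_upwards [ae_coord_ne (k + 2) (Fin.last (k + 1)), ae_coord_ne (k + 2) 0] with w hwl hw0
  have hw : ‖(w : EE (k + 2))‖ = 1 := by simp
  have hi := initPart_pos k w hw0
  have hn := normsq_initPart (k + 1) w
  rw [hw, one_pow] at hn
  set a := (w : EE (k + 2)) (Fin.last (k + 1)) with ha
  have ha' := abs_pos.2 hwl
  have hgam := lintegral_gamma (q := k) (b := 1) (by linarith) one_pos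
  simp only [one_rpow, one_mul] at hgam
  have hpt : ∀ r ∈ Set.Ioi (0 : ℝ), ENNReal.ofReal (r ^ (Module.finrank ℝ (EE (k + 2)) - 1)) *
      (ENNReal.ofReal ‖initPart (k + 1) (r • (w : EE (k + 2)))‖ ^ μ *
        (ENNReal.ofReal |(r • (w : EE (k + 2))) (Fin.last (k + 1))| ^ (-1 - μ) * gaussExt φ (r • (w : EE (k + 2))))) =
      ENNReal.ofReal (r ^ (k : ℝ) * exp (-1 * r ^ 2)) *
        (φ w * ENNReal.ofReal (1 - a ^ 2) ^ (μ / 2) * ENNReal.ofReal |a| ^ (-1 - μ)) := by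
    intro r hr
    have hr : 0 < r := hr
    rw [gaussExt_smul φ _ hw hr, extSph_apply, initPart_smul, norm_smul]
    simp only [PiLp.smul_apply, smul_eq_mul, ← ha]
    have e1 : ENNReal.ofReal (1 - a ^ 2) ^ (μ / 2) = ENNReal.ofReal ‖initPart (k + 1) w‖ ^ μ := by
      rw [← hn, ENNReal.ofReal_rpow_of_pos (by positivity), ENNReal.ofReal_rpow_of_pos hi, ← rpow_natCast, ← rpow_mul hi.le]
      congr 2
      push_cast; ring
    rw [e1, abs_mul, norm_of_nonneg hr.le, abs_of_pos hr, ENNReal.ofReal_mul hr.le, ENNReal.ofReal_mul hr.le,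
      ENNReal.mul_rpow_of_ne_top ENNReal.ofReal_ne_top ENNReal.ofReal_ne_top,
      ENNReal.mul_rpow_of_ne_top ENNReal.ofReal_ne_top ENNReal.ofReal_ne_top]
    have e2 : ENNReal.ofReal (r ^ (k : ℝ) * exp (-1 * r ^ 2)) = ENNReal.ofReal (r ^ (Module.finrank ℝ (EE (k + 2)) - 1)) *
        ENNReal.ofReal r ^ μ * ENNReal.ofReal r ^ (-1 - μ) * ENNReal.ofReal (exp (-r ^ 2)) := by
      rw [ENNReal.ofReal_rpow_of_pos hr, ENNReal.ofReal_rpow_of_pos hr, finrank_euclideanSpace, Fintype.card_fin,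
        ← ENNReal.ofReal_mul (by positivity), ← ENNReal.ofReal_mul (by positivity), ← ENNReal.ofReal_mul (by positivity)]
      congr 1
      rw [neg_one_mul]
      congr 1
      rw [show k + 2 - 1 = k + 1 by omega, ← rpow_natCast r (k + 1), ← rpow_add hr, ← rpow_add hr]
      congr 1
      push_cast; ring
    rw [e2]
    ring
  rw [setLIntegral_congr_fun measurableSet_Ioi hpt, lintegral_mul_const _ (by fun_prop), hgam]

theorem stmt15 (n : ℕ) (hn : 3 ≤ n) (μ : ℝ) (hμ : -1 < μ) (c : ℝ)
    (hc : c = Real.Gamma (((n : ℝ) - 1) / 2) / Real.Gamma (1 / 2) *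
      Real.Gamma ((μ + 1) / 2) / Real.Gamma ((μ + (n : ℝ) - 1) / 2))
    (φ : sphere (0 : EuclideanSpace ℝ (Fin n)) 1 → ℝ≥0∞) (hφ : Measurable φ) :
    (∫⁻ w, Funk n φ w *
        ENNReal.ofReal |(w : EuclideanSpace ℝ (Fin n)) ⟨n - 1, by omega⟩| ^ μ *
        ENNReal.ofReal (1 - ((w : EuclideanSpace ℝ (Fin n)) ⟨n - 1, by omega⟩) ^ 2) ^
          ((1 - μ - (n : ℝ)) / 2) ∂(sphMeasure n)) =
      ENNReal.ofReal c *
        ∫⁻ θ, φ θ *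
          ENNReal.ofReal (1 - ((θ : EuclideanSpace ℝ (Fin n)) ⟨n - 1, by omega⟩) ^ 2) ^ (μ / 2) *
          ENNReal.ofReal |(θ : EuclideanSpace ℝ (Fin n)) ⟨n - 1, by omega⟩| ^ (-1 - μ)
          ∂(sphMeasure n) := by
  obtain ⟨k, rfl⟩ : ∃ k, n = k + 2 := ⟨n - 2, by omega⟩
  have hlast : ∀ h : k + 2 - 1 < k + 2, (⟨k + 2 - 1, h⟩ : Fin (k + 2)) = Fin.last (k + 1) :=
    fun h => rfl
  simp only [hlast]
  have hk : (0 : ℝ) ≤ k := Nat.cast_nonneg k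
  have hA := stepA k μ hμ φ hφ
  rw [stepB k μ hμ φ hφ, stepC k μ φ hφ] at hA
  have e1 : (1 - μ - ((k + 2 : ℕ) : ℝ)) / 2 = -(μ + k + 1) / 2 := by push_cast; ring
  have e2 : c = Gamma (((k : ℝ) + 1) / 2) / √π * Gamma ((μ + 1) / 2) / Gamma ((μ + k + 1) / 2) := by
    rw [hc, Gamma_one_half_eq]
    push_cast
    rw [show (k : ℝ) + 2 - 1 = k + 1 by ring, show μ + ((k : ℝ) + 2) - 1 = μ + k + 1 by ring]
  rw [e1]
  unfold sphMeasure
  rw [lintegral_smul_measure, lintegral_smul_measure, smul_eq_mul, smul_eq_mul,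
    ← mul_assoc (ENNReal.ofReal c), mul_comm (ENNReal.ofReal c), mul_assoc]
  congr 1
  have g1 : 0 < Gamma ((μ + k + 1) / 2) := Gamma_pos_of_pos (by linarith)
  have g2 : 0 < Gamma ((μ + 1) / 2) := Gamma_pos_of_pos (by linarith)
  have g3 : 0 < Gamma (((k : ℝ) + 1) / 2) := Gamma_pos_of_pos (by linarith)
  have hD : 0 < π ^ (((k + 1 : ℕ) : ℝ) / 2) * (1 / 2 * Gamma ((μ + k + 1) / 2)) := by positivity
  refine (ENNReal.mul_right_inj (by simpa using hD) ENNReal.ofReal_ne_top).1 (hA.symm.trans ?_)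
  rw [← mul_assoc, ← mul_assoc, ← ENNReal.ofReal_mul (by positivity), ← ENNReal.ofReal_mul hD.le]
  congr 2
  rw [e2]
  have e3 : π ^ (((k + 1 : ℕ) : ℝ) / 2) = π ^ ((k : ℝ) / 2) * √π := by
    rw [sqrt_eq_rpow]
    push_cast
    rw [add_div, rpow_add pi_pos]
  rw [e3]
  have : 0 < √π := by positivity
  field_simp
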